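/- arXiv:1510.05455 — 2 statements merged into one kernel-verified Lean document; each statement's English description precedes it below -/
import Mathlib

section
/- Let v be a radial weight in the class D̂ satisfying M₂(v) = sup_{0<r<1} (∫₀^r v̂(s)/(1-s)⁴ ds)^{1/2} (∫_r¹ (1-s)²/v̂(s) ds)^{1/2} < ∞. Then for every q > 0 there exists a constant C = C(q,v) > 0 such that Σ_{n=k}^∞ 2^{-3qn} (v_{2^{n+1}})^{-q} ≤ C · 2^{-3qk} (v_{2^{k+1}})^{-q} for all integers k ≥ 0, where v_x = ∫₀¹ s^x v(s) ds. -/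
open MeasureTheory Real Set Filter

noncomputable section

/-- `hatw v r = ∫_r^1 v(s) ds`. -/
def hatw (v : ℝ → ℝ) (r : ℝ) : ℝ := ∫ s in r..1, v s

/-- A radial weight: measurable, positive on `[0,1)`, integrable on `(0,1)`. -/
def RadialWeight (v : ℝ → ℝ) : Prop :=
  Measurable v ∧ (∀ r ∈ Set.Ico (0:ℝ) 1, 0 < v r) ∧
    MeasureTheory.IntegrableOn v (Set.Ioo 0 1)

/-- Membership in the class `D̂`. -/
def DoublingD (v : ℝ → ℝ) : Prop :=
  ∃ C : ℝ, 1 ≤ C ∧ ∀ r ∈ Set.Ico (0:ℝ) 1, hatw v r ≤ C * hatw v ((1+r)/2)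

/-- Squared Dirichlet-type norm `‖f‖_{D_v}^2`. -/
def DvSq (v : ℝ → ℝ) (f : ℂ → ℂ) : ENNReal :=
  (‖f 0‖₊ : ENNReal)^2 +
    (ENNReal.ofReal Real.pi)⁻¹ *
      ∫⁻ z in Metric.ball (0:ℂ) 1, (‖deriv f z‖₊ : ENNReal)^2 * ENNReal.ofReal (v ‖z‖)

/-- The Muckenhoupt type quantity `M₁(v)`. -/
def M1v (v : ℝ → ℝ) : ENNReal :=
  ⨆ r ∈ Set.Ioo (0:ℝ) 1,
    (∫⁻ s in Set.Ioo r 1, ENNReal.ofReal (hatw v s / (1-s)^2)) ^ (1/2 : ℝ) *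
    (∫⁻ s in Set.Ioo (0:ℝ) r, ENNReal.ofReal (1 / hatw v s)) ^ (1/2 : ℝ)

/-- The Muckenhoupt type quantity `M₂(v)`. -/
def M2v (v : ℝ → ℝ) : ENNReal :=
  ⨆ r ∈ Set.Ioo (0:ℝ) 1,
    (∫⁻ s in Set.Ioo (0:ℝ) r, ENNReal.ofReal (hatw v s / (1-s)^4)) ^ (1/2 : ℝ) *
    (∫⁻ s in Set.Ioo r 1, ENNReal.ofReal ((1-s)^2 / hatw v s)) ^ (1/2 : ℝ)

/-- The moment `v_x = ∫_0^1 s^x v(s) ds`. -/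
def vx (v : ℝ → ℝ) (x : ℕ) : ℝ := ∫ s in (0:ℝ)..1, s^x * v s

/-- `M_∞(s,f)`, the maximum of `|f|` on the circle of radius `s`. -/
def Minf (f : ℂ → ℂ) (s : ℝ) : ℝ := sSup ((fun z => ‖f z‖) '' Metric.sphere (0:ℂ) s)

/-- `M₂(r,h)`. -/
def M2mean (h : ℂ → ℂ) (r : ℝ) : ℝ :=
  Real.sqrt ((2*Real.pi)⁻¹ * ∫ θ in (-Real.pi)..Real.pi, ‖h ((r:ℂ) * Complex.exp (θ * Complex.I))‖^2)

/-- The norm of `B(2,∞)` (with values in `[0,∞]`). -/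
def B2infE (g : ℂ → ℂ) : ENNReal :=
  (‖g 0‖₊ : ENNReal) +
    ⨆ r ∈ Set.Ioo (0:ℝ) 1, ENNReal.ofReal (M2mean (deriv g) r * Real.sqrt (1-r))

/-- The `p`-th power of the norm of `B(2,p)` (with values in `[0,∞]`). -/
def B2pE (p : ℝ) (g : ℂ → ℂ) : ENNReal :=
  ENNReal.ofReal (‖g 0‖ ^ p) +
    ∫⁻ r in Set.Ioo (0:ℝ) 1, ENNReal.ofReal (M2mean (deriv g) r ^ p * (1-r)^(p/2-1))

/-- The generalized Hilbert operator `H_g`. -/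
def Hg (g f : ℂ → ℂ) (z : ℂ) : ℂ := ∫ t in Set.Ioo (0:ℝ) 1, f t * deriv g (t * z)

/-- The Hilbert operator `H` acting on functions on `[0,1)`. -/
def Hop (φ : ℝ → ℂ) (z : ℂ) : ℂ := ∫ t in Set.Ioo (0:ℝ) 1, φ t / (1 - t * z)

/-- The sublinear Hilbert operator `H̃`. -/
def Htil (φ : ℝ → ℂ) (z : ℂ) : ℂ := ∫ t in Set.Ioo (0:ℝ) 1, (‖φ t‖ : ℂ) / (1 - t * z)

/-- Squared norm in `L²_{V̂₂}`. -/
def L2V2sq (v : ℝ → ℝ) (φ : ℝ → ℂ) : ENNReal :=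
  ∫⁻ t in Set.Ioo (0:ℝ) 1, (‖φ t‖₊ : ENNReal)^2 * ENNReal.ofReal (hatw v t / (1-t)^2)

/-- Taylor coefficient `ĝ(k)` of `g` at the origin. -/
def gcoef (g : ℂ → ℂ) (k : ℕ) : ℂ := iteratedDeriv k g 0 / (Nat.factorial k)


lemma aux_abs (b t β : ℕ → ℝ) (c K l u : ℝ) (hc : 0 < c) (hK : 0 < K) (hl : 0 < l) (hu : 0 < u)
    (hb : ∀ n, 0 < b n) (ht : ∀ n, 0 ≤ t n)
    (h1 : ∀ n, c * b n + t (n+1) ≤ t n) (h2 : ∀ n, t n ≤ K * b n)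
    (hβl : ∀ n, l * b n ≤ β n) (hβu : ∀ n, β n ≤ u * b n) (q : ℝ) (hq : 0 < q) :
    ∃ C : ℝ, 0 < C ∧ ∀ k : ℕ, (∑' m : ℕ, ENNReal.ofReal ((β (m+k)) ^ q)) ≤
      ENNReal.ofReal (C * (β k) ^ q) := by
  have hcK : c ≤ K := by
    have := h1 0; have := h2 0; have := ht 1; have := hb 0
    by_contra! h
    nlinarith
  set ρ : ℝ := 1 - c / K with hρ
  have hρ0 : 0 ≤ ρ := by
    rw [hρ, sub_nonneg, div_le_one hK]; exact hcK
  have hρ1 : ρ < 1 := by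
    have : 0 < c / K := by positivity
    linarith
  have hstep : ∀ n, t (n+1) ≤ ρ * t n := by
    intro n
    have e : c / K * t n ≤ c * b n := by
      rw [div_mul_eq_mul_div, div_le_iff₀ hK]
      nlinarith [h2 n]
    have := h1 n
    rw [hρ]; linarith
  have hgeo : ∀ k m, t (m+k) ≤ ρ ^ m * t k := by
    intro k m
    induction m with
    | zero => simp
    | succ m ih =>
      have := hstep (m+k)
      rw [show m + 1 + k = m + k + 1 by ring, pow_succ']
      nlinarith
  have hβ0 : ∀ n, 0 < β n := fun n => lt_of_lt_of_le (mul_pos hl (hb n)) (hβl n)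
  set G : ℝ := u * K / (c * l) with hG
  have hG0 : 0 < G := by positivity
  have hmain : ∀ k m, β (m+k) ≤ ρ ^ m * (G * β k) := by
    intro k m
    have e1 : c * b (m+k) ≤ t (m+k) := by linarith [h1 (m+k), ht (m+k+1)]
    have e2 : t (m+k) ≤ ρ^m * (K * b k) :=
      (hgeo k m).trans (mul_le_mul_of_nonneg_left (h2 k) (by positivity))
    have e3 : K * b k ≤ K * (β k / l) := by
      apply mul_le_mul_of_nonneg_left _ hK.le
      rw [le_div_iff₀ hl]; linarith [hβl k]
    have e4 : c * b (m+k) ≤ ρ^m * (K * (β k / l)) :=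
      e1.trans (e2.trans (mul_le_mul_of_nonneg_left e3 (by positivity)))
    calc β (m+k) ≤ u * b (m+k) := hβu _
      _ = u / c * (c * b (m+k)) := by field_simp
      _ ≤ u / c * (ρ^m * (K * (β k / l))) := mul_le_mul_of_nonneg_left e4 (by positivity)
      _ = ρ ^ m * (G * β k) := by rw [hG]; field_simp
  set σ := ρ ^ q with hσ
  have hσ0 : 0 ≤ σ := Real.rpow_nonneg hρ0 _
  have hσ1 : σ < 1 := Real.rpow_lt_one hρ0 hρ1 hq
  refine ⟨(1-σ)⁻¹ * G ^ q, mul_pos (inv_pos.2 (by linarith)) (Real.rpow_pos_of_pos hG0 _), ?_⟩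
  intro k
  have hterm : ∀ m, (β (m+k)) ^ q ≤ σ ^ m * (G^q * (β k)^q) := by
    intro m
    calc (β (m+k)) ^ q ≤ (ρ ^ m * (G * β k)) ^ q :=
          Real.rpow_le_rpow (hβ0 _).le (hmain k m) hq.le
      _ = σ ^ m * (G^q * (β k)^q) := by
        rw [Real.mul_rpow (by positivity) (by have := hβ0 k; positivity),
          Real.mul_rpow hG0.le (hβ0 k).le, hσ, ← Real.rpow_natCast, ← Real.rpow_natCast,
          ← Real.rpow_mul hρ0, ← Real.rpow_mul hρ0, mul_comm q]
  have hs : HasSum (fun m => σ ^ m * (G^q * (β k)^q)) ((1-σ)⁻¹ * (G^q * (β k)^q)) :=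
    (hasSum_geometric_of_lt_one hσ0 hσ1).mul_right _
  have hB : 0 ≤ G^q * (β k)^q := mul_nonneg (Real.rpow_nonneg hG0.le _) (Real.rpow_nonneg (hβ0 k).le _)
  calc (∑' m : ℕ, ENNReal.ofReal ((β (m+k)) ^ q))
      ≤ ∑' m : ℕ, ENNReal.ofReal (σ ^ m * (G^q * (β k)^q)) :=
        ENNReal.tsum_le_tsum fun m => ENNReal.ofReal_le_ofReal (hterm m)
    _ = ENNReal.ofReal (∑' m : ℕ, σ ^ m * (G^q * (β k)^q)) :=
        (ENNReal.ofReal_tsum_of_nonneg (fun m => mul_nonneg (pow_nonneg hσ0 _) hB) hs.summable).symm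
    _ = _ := by rw [hs.tsum_eq, mul_assoc]

lemma RW.ii {v : ℝ → ℝ} (hv : RadialWeight v) : IntervalIntegrable v volume 0 1 := by
  rw [intervalIntegrable_iff_integrableOn_Ioo_of_le zero_le_one]
  exact hv.2.2

lemma RW.iis {v : ℝ → ℝ} (hv : RadialWeight v) {a c : ℝ} (ha : 0 ≤ a) (hac : a ≤ c) (hc : c ≤ 1) :
    IntervalIntegrable v volume a c :=
  (RW.ii hv).mono_set (by
    rw [uIcc_of_le hac, uIcc_of_le zero_le_one]; exact Icc_subset_Icc ha hc)

lemma RW.iip {v : ℝ → ℝ} (hv : RadialWeight v) (N : ℕ) {a c : ℝ} (ha : 0 ≤ a) (hac : a ≤ c)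
    (hc : c ≤ 1) : IntervalIntegrable (fun s => s^N * v s) volume a c :=
  (RW.iis hv ha hac hc).continuousOn_mul (by fun_prop)

lemma hatw_pos {v : ℝ → ℝ} (hv : RadialWeight v) {r : ℝ} (h0 : 0 ≤ r) (h1 : r < 1) :
    0 < hatw v r :=
  intervalIntegral.intervalIntegral_pos_of_pos_on (RW.iis hv h0 h1.le le_rfl)
    (fun x hx => hv.2.1 x ⟨h0.trans hx.1.le, hx.2⟩) h1

lemma int_mono {f g : ℝ → ℝ} {a c : ℝ} (hac : a ≤ c) (hf : IntervalIntegrable f volume a c)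
    (hg : IntervalIntegrable g volume a c) (h : ∀ x ∈ Ioo a c, f x ≤ g x) :
    ∫ s in a..c, f s ≤ ∫ s in a..c, g s :=
  intervalIntegral.integral_mono_on_of_le_Ioo hac hf hg h

lemma hatw_anti {v : ℝ → ℝ} (hv : RadialWeight v) {r s : ℝ} (h0 : 0 ≤ r) (hrs : r ≤ s) (h1 : s ≤ 1) :
    hatw v s ≤ hatw v r := by
  unfold hatw
  rw [← intervalIntegral.integral_add_adjacent_intervals (RW.iis hv h0 hrs h1)
    (RW.iis hv (h0.trans hrs) h1 le_rfl)]
  have : ∫ x in r..s, (0:ℝ) ≤ ∫ x in r..s, v x :=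
    int_mono hrs (by simp) (RW.iis hv h0 hrs h1)
      fun x hx => (hv.2.1 x ⟨h0.trans hx.1.le, hx.2.trans_le h1⟩).le
  simp at this
  linarith

lemma vx_le_hat {v : ℝ → ℝ} (hv : RadialWeight v) (N : ℕ) : vx v N ≤ hatw v 0 := by
  apply int_mono zero_le_one (RW.iip hv N le_rfl zero_le_one le_rfl) (RW.ii hv)
  intro x hx
  have := (hv.2.1 x ⟨hx.1.le, hx.2⟩).le
  exact mul_le_of_le_one_left this (pow_le_one₀ hx.1.le hx.2.le)

lemma vx_lower {v : ℝ → ℝ} (hv : RadialWeight v) (N : ℕ) {r : ℝ} (h0 : 0 ≤ r) (h1 : r ≤ 1) :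
    r^N * hatw v r ≤ vx v N := by
  unfold vx hatw
  rw [← intervalIntegral.integral_add_adjacent_intervals (RW.iip hv N le_rfl h0 h1)
    (RW.iip hv N h0 h1 le_rfl), ← intervalIntegral.integral_const_mul]
  have e1 : ∫ x in (0:ℝ)..r, (0:ℝ) ≤ ∫ x in (0:ℝ)..r, x^N * v x :=
    int_mono h0 (by simp) (RW.iip hv N le_rfl h0 h1)
      fun x hx => mul_nonneg (pow_nonneg hx.1.le _) (hv.2.1 x ⟨hx.1.le, hx.2.trans_le h1⟩).le
  have e2 : ∫ x in r..1, r^N * v x ≤ ∫ x in r..1, x^N * v x :=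
    int_mono h1 ((RW.iis hv h0 h1 le_rfl).const_mul _) (RW.iip hv N h0 h1 le_rfl)
      fun x hx => mul_le_mul_of_nonneg_right (pow_le_pow_left₀ h0 hx.1.le _)
        (hv.2.1 x ⟨h0.trans hx.1.le, hx.2⟩).le
  simp at e1
  linarith

lemma vx_rec {v : ℝ → ℝ} (hv : RadialWeight v) (N : ℕ) {r : ℝ} (h0 : 0 ≤ r) (h1 : r ≤ 1) :
    vx v (N + N) ≤ hatw v r + r^N * vx v N := by
  unfold vx hatw
  rw [← intervalIntegral.integral_add_adjacent_intervals (RW.iip hv (N+N) le_rfl h0 h1)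
    (RW.iip hv (N+N) h0 h1 le_rfl), ← intervalIntegral.integral_add_adjacent_intervals (RW.iip hv N le_rfl h0 h1)
    (RW.iip hv N h0 h1 le_rfl)]
  have e1 : ∫ x in (0:ℝ)..r, x^(N+N) * v x ≤ ∫ x in (0:ℝ)..r, r^N * (x^N * v x) :=
    int_mono h0 (RW.iip hv _ le_rfl h0 h1) ((RW.iip hv N le_rfl h0 h1).const_mul _)
      fun x hx => by
        have := (hv.2.1 x ⟨hx.1.le, hx.2.trans_le h1⟩).le
        have h2 : 0 ≤ x^N * v x := mul_nonneg (pow_nonneg hx.1.le _) this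
        rw [pow_add, mul_assoc]
        exact mul_le_mul_of_nonneg_right (pow_le_pow_left₀ hx.1.le hx.2.le _) h2
  have e2 : ∫ x in r..1, x^(N+N) * v x ≤ ∫ x in r..1, v x :=
    int_mono h1 (RW.iip hv _ h0 h1 le_rfl) (RW.iis hv h0 h1 le_rfl)
      fun x hx => mul_le_of_le_one_left (hv.2.1 x ⟨h0.trans hx.1.le, hx.2⟩).le
        (pow_le_one₀ (h0.trans hx.1.le) hx.2.le)
  have e3 : ∫ x in r..1, (0:ℝ) ≤ ∫ x in r..1, x^N * v x :=
    int_mono h1 (by simp) (RW.iip hv N h0 h1 le_rfl)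
      fun x hx => mul_nonneg (pow_nonneg (h0.trans hx.1.le) _) (hv.2.1 x ⟨h0.trans hx.1.le, hx.2⟩).le
  rw [intervalIntegral.integral_const_mul] at e1
  simp only [intervalIntegral.integral_zero] at e3
  have := mul_nonneg (pow_nonneg h0 N) e3
  rw [mul_add]
  linarith

/-- dyadic step -/
def xx (n : ℕ) : ℝ := (1/2:ℝ)^(n+1)

lemma xx_pos (n : ℕ) : 0 < xx n := by unfold xx; positivity
lemma xx_le (n : ℕ) : xx n ≤ 1/2 := by
  unfold xx; rw [pow_succ]
  have : (1/2:ℝ)^n ≤ 1 := pow_le_one₀ (by norm_num) (by norm_num)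
  linarith
lemma xx_succ (n : ℕ) : xx (n+1) = xx n / 2 := by unfold xx; rw [pow_succ]; ring
lemma xx_zero : xx 0 = 1/2 := by unfold xx; norm_num

lemma quarter (n : ℕ) : (1/4:ℝ) ≤ (1 - xx n)^(2^(n+1)) := by
  induction n with
  | zero => rw [xx_zero]; norm_num
  | succ n ih =>
    refine ih.trans ?_
    rw [pow_succ 2 (n+1), mul_comm (2^(n+1)) 2, pow_mul (1 - xx (n+1))]
    apply pow_le_pow_left₀
    · linarith [xx_le n]
    · rw [xx_succ]; nlinarith [sq_nonneg (xx n)]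

lemma vx_upper {v : ℝ → ℝ} (hv : RadialWeight v) {C : ℝ} (hC : 1 ≤ C)
    (hD : ∀ r ∈ Set.Ico (0:ℝ) 1, hatw v r ≤ C * hatw v ((1+r)/2)) :
    ∃ D : ℝ, 0 < D ∧ ∀ k, vx v (2^(k+1)) ≤ D * hatw v (1 - xx k) := by
  have hA : ∀ n, 0 < hatw v (1 - xx n) := fun n =>
    hatw_pos hv (by linarith [xx_le n]) (by linarith [xx_pos n])
  have hstep : ∀ n, hatw v (1 - xx n) ≤ C * hatw v (1 - xx (n+1)) := by
    intro n
    have := hD (1 - xx n) ⟨by linarith [xx_le n], by linarith [xx_pos n]⟩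
    rwa [show (1 + (1 - xx n))/2 = 1 - xx (n+1) by rw [xx_succ]; ring] at this
  have hiter : ∀ j i, hatw v (1 - xx i) ≤ C^j * hatw v (1 - xx (i+j)) := by
    intro j i
    induction j with
    | zero => simp
    | succ j ih =>
      refine ih.trans ?_
      rw [pow_succ, mul_assoc]
      exact mul_le_mul_of_nonneg_left (hstep _) (by positivity)
  have h0 : hatw v 0 ≤ C * hatw v (1 - xx 0) := by
    have := hD 0 ⟨le_rfl, one_pos⟩
    rwa [show (1 + (0:ℝ))/2 = 1 - xx 0 by rw [xx_zero]; norm_num] at this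
  have h00 : ∀ k, hatw v 0 ≤ C^(k+1) * hatw v (1 - xx k) := by
    intro k
    have := hiter k 0
    rw [zero_add] at this
    refine h0.trans ?_
    rw [pow_succ', mul_assoc]
    exact mul_le_mul_of_nonneg_left this (by linarith)
  obtain ⟨j, hj⟩ := exists_nat_ge (2 * Real.log (2*C))
  have hexp : Real.exp (-((j:ℝ)/2)) ≤ 1/(2*C) := by
    rw [Real.exp_neg, one_div]
    apply inv_anti₀ (by positivity)
    rw [← Real.log_le_iff_le_exp (by positivity)]
    linarith
  refine ⟨2 * C^(j+1), by positivity, ?_⟩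
  intro k
  induction k with
  | zero =>
    refine (vx_le_hat hv _).trans ((h00 0).trans ?_)
    apply mul_le_mul_of_nonneg_right _ (hA 0).le
    have : C^(0+1) ≤ C^(j+1) := pow_le_pow_right₀ hC (by omega)
    have : 0 < C^(j+1) := by positivity
    linarith
  | succ k ih =>
    by_cases hk : k + 1 < j
    · refine (vx_le_hat hv _).trans ((h00 (k+1)).trans ?_)
      apply mul_le_mul_of_nonneg_right _ (hA (k+1)).le
      have : C^(k+1+1) ≤ C^(j+1) := pow_le_pow_right₀ hC (by omega)
      have : 0 < C^(j+1) := by positivity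
      linarith
    · obtain ⟨i, hi⟩ : ∃ i, k + 1 = i + j := ⟨k+1-j, by omega⟩
      have hr0 : 0 ≤ 1 - xx i := by linarith [xx_le i]
      have e := vx_rec hv (2^(k+1)) hr0 (by linarith [xx_pos i])
      rw [← mul_two, ← pow_succ] at e
      have e1 : (1 - xx i)^(2^(k+1)) ≤ 1/(2*C) := by
        refine le_trans ?_ hexp
        calc (1 - xx i)^(2^(k+1)) ≤ (Real.exp (-(xx i)))^(2^(k+1)) :=
              pow_le_pow_left₀ hr0 (Real.one_sub_le_exp_neg _) _
          _ = Real.exp (-(2^j/2)) := by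
              rw [← Real.exp_nat_mul, hi]; congr 1; unfold xx
              push_cast
              rw [pow_add, pow_succ, one_div, inv_pow]
              field_simp
          _ ≤ _ := by
              apply Real.exp_le_exp.2
              have : (j:ℝ) ≤ 2^j := by exact_mod_cast Nat.lt_two_pow_self.le
              linarith
      have e2 := hiter j i
      rw [← hi] at e2
      have e3 := hstep k
      have hP : 0 < C^j := by positivity
      have e4 : (1 - xx i)^(2^(k+1)) * vx v (2^(k+1)) ≤ 1/(2*C) * (2*C^(j+1) * (C * hatw v (1 - xx (k+1)))) := by
        apply mul_le_mul e1 (ih.trans (mul_le_mul_of_nonneg_left e3 (by positivity))) _ (by positivity)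
        have := vx_lower hv (2^(k+1)) le_rfl zero_le_one
        refine le_trans ?_ this
        exact mul_nonneg (by positivity) (hatw_pos hv le_rfl one_pos).le
      have e5 : 1/(2*C) * (2*C^(j+1) * (C * hatw v (1 - xx (k+1)))) = C^(j+1) * hatw v (1 - xx (k+1)) := by
        field_simp
      have e6 : C^j * hatw v (1 - xx (k+1)) ≤ C^(j+1) * hatw v (1 - xx (k+1)) :=
        mul_le_mul_of_nonneg_right (pow_le_pow_right₀ hC (by omega)) (hA _).le
      linarith

lemma lint_lower (f : ℝ → ℝ) (S : Set ℝ) (hS : MeasurableSet S) (a c m : ℝ) (hm : 0 ≤ m)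
    (hsub : S ⊆ Icc a c) (hvol : volume S = ENNReal.ofReal (c - a)) (h : ∀ s ∈ S, m ≤ f s) :
    ENNReal.ofReal (m * (c - a)) ≤ ∫⁻ s in S, ENNReal.ofReal (f s) := by
  calc ENNReal.ofReal (m * (c - a)) = ∫⁻ s in S, ENNReal.ofReal m := by
        rw [setLIntegral_const, hvol, ENNReal.ofReal_mul hm]
    _ ≤ _ := setLIntegral_mono' hS fun s hs => ENNReal.ofReal_le_ofReal (h s hs)

lemma I1_lower {v : ℝ → ℝ} (hv : RadialWeight v) (n : ℕ) :
    ENNReal.ofReal (hatw v (1 - xx n) / (16 * xx n ^ 3)) ≤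
      ∫⁻ s in Set.Ioo (0:ℝ) (1 - xx n), ENNReal.ofReal (hatw v s / (1-s)^4) := by
  have hx := xx_pos n
  have hx2 := xx_le n
  have hA : 0 < hatw v (1 - xx n) := hatw_pos hv (by linarith) (by linarith)
  have := lint_lower (fun s => hatw v s / (1-s)^4) (Ioo (1 - 2 * xx n) (1 - xx n)) measurableSet_Ioo
    (1 - 2 * xx n) (1 - xx n) (hatw v (1 - xx n) / (2 * xx n)^4) (by positivity) Ioo_subset_Icc_self
    (by rw [Real.volume_Ioo]) (by
      intro s hs
      apply div_le_div₀
      · exact (hatw_pos hv (by linarith [hs.1]) (by linarith [hs.2])).le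
      · exact hatw_anti hv (by linarith [hs.1]) hs.2.le (by linarith)
      · have : 0 < 1 - s := by linarith [hs.2]
        positivity
      · exact pow_le_pow_left₀ (by linarith [hs.2]) (by linarith [hs.1]) _)
  refine le_trans (le_of_eq ?_) (this.trans (lintegral_mono_set (Ioo_subset_Ioo_left (by linarith))))
  congr 1
  field_simp
  ring

lemma I2_step {v : ℝ → ℝ} (hv : RadialWeight v) (n : ℕ) :
    ENNReal.ofReal (xx n ^ 3 / (8 * hatw v (1 - xx n))) +
      (∫⁻ s in Set.Ioo (1 - xx (n+1)) 1, ENNReal.ofReal ((1-s)^2 / hatw v s)) ≤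
      ∫⁻ s in Set.Ioo (1 - xx n) 1, ENNReal.ofReal ((1-s)^2 / hatw v s) := by
  have hx := xx_pos n
  have hx2 := xx_le n
  have hs := xx_succ n
  have hA : 0 < hatw v (1 - xx n) := hatw_pos hv (by linarith) (by linarith)
  have := lint_lower (fun s => (1-s)^2 / hatw v s) (Ioc (1 - xx n) (1 - xx (n+1))) measurableSet_Ioc
    (1 - xx n) (1 - xx (n+1)) ((xx (n+1))^2 / hatw v (1 - xx n))
    (by positivity) Ioc_subset_Icc_self
    (by rw [Real.volume_Ioc]) (by
      intro s hs
      apply div_le_div₀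
      · positivity
      · exact pow_le_pow_left₀ (xx_pos _).le (by linarith [hs.2]) _
      · exact (hatw_pos hv (by linarith [hs.1]) (by linarith [hs.2, xx_pos (n+1)]))
      · exact hatw_anti hv (by linarith) hs.1.le (by linarith [hs.2, xx_pos (n+1)]))
  rw [← Ioc_union_Ioo_eq_Ioo (a := 1 - xx n) (b := 1 - xx (n+1)) (c := 1) (by linarith)
    (by linarith [xx_pos (n+1)]),
    lintegral_union measurableSet_Ioo (by
      rw [Set.disjoint_left]; intro x h1 h2; exact absurd h1.2 (not_le.2 h2.1))]
  gcongr
  refine le_trans (le_of_eq ?_) this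
  congr 1
  rw [hs]
  field_simp
  ring

lemma main_aux (v : ℝ → ℝ) (hv : RadialWeight v) (hD : DoublingD v)
    (hM2 : M2v v < ⊤) (q : ℝ) (hq : 0 < q) :
    ∃ C : ℝ, 0 < C ∧ ∀ k : ℕ,
      (∑' m : ℕ, ENNReal.ofReal ((((1/8:ℝ)^(m+k)) / vx v (2^(m+k+1))) ^ q)) ≤
        ENNReal.ofReal (C * ((1/8:ℝ)^k / vx v (2^(k+1))) ^ q) := by
  obtain ⟨C, hC, hD⟩ := hD
  obtain ⟨D, hD0, hDk⟩ := vx_upper hv hC hD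
  have hA : ∀ n, 0 < hatw v (1 - xx n) := fun n =>
    hatw_pos hv (by linarith [xx_le n]) (by linarith [xx_pos n])
  have hlow : ∀ n, 1/4 * hatw v (1 - xx n) ≤ vx v (2^(n+1)) := fun n =>
    (mul_le_mul_of_nonneg_right (quarter n) (hA n).le).trans
      (vx_lower hv _ (by linarith [xx_le n]) (by linarith [xx_pos n]))
  have hx8 : ∀ n, xx n ^ 3 = (1/8) * (1/8:ℝ)^n := by
    intro n; unfold xx
    rw [← pow_mul, mul_comm, pow_mul, ← pow_succ']; norm_num
  set T : ℕ → ENNReal := fun n =>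
    ∫⁻ s in Set.Ioo (1 - xx n) 1, ENNReal.ofReal ((1-s)^2 / hatw v s) with hT
  set b : ℕ → ℝ := fun n => xx n ^ 3 / hatw v (1 - xx n) with hb
  have hb0 : ∀ n, 0 < b n := fun n => div_pos (pow_pos (xx_pos n) 3) (hA n)
  set M : ℝ := (M2v v).toReal with hM
  have hMe : M2v v = ENNReal.ofReal M := (ENNReal.ofReal_toReal hM2.ne).symm
  have hM0 : 0 ≤ M := ENNReal.toReal_nonneg
  have hTb : ∀ n, T n ≤ ENNReal.ofReal (16 * (M^2 + 1) * b n) := by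
    intro n
    have h1 : _ ≤ M2v v := le_iSup₂_of_le (f := fun r (_ : r ∈ Set.Ioo (0:ℝ) 1) =>
        (∫⁻ s in Set.Ioo (0:ℝ) r, ENNReal.ofReal (hatw v s / (1-s)^4)) ^ (1/2 : ℝ) *
        (∫⁻ s in Set.Ioo r 1, ENNReal.ofReal ((1-s)^2 / hatw v s)) ^ (1/2 : ℝ))
      (1 - xx n) ⟨by linarith [xx_le n], by linarith [xx_pos n]⟩ le_rfl
    rw [← ENNReal.mul_rpow_of_nonneg _ _ (by norm_num : (0:ℝ) ≤ 1/2)] at h1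
    have h2 := ENNReal.rpow_le_rpow h1 (by norm_num : (0:ℝ) ≤ 2)
    rw [← ENNReal.rpow_mul, show (1/2:ℝ)*2 = 1 by norm_num, ENNReal.rpow_one, hMe,
      ENNReal.ofReal_rpow_of_nonneg hM0 (by norm_num)] at h2
    have h3 : ENNReal.ofReal (hatw v (1 - xx n) / (16 * xx n ^ 3)) * T n ≤ ENNReal.ofReal (M^2) := by
      refine (mul_le_mul_left (I1_lower hv n) _).trans (h2.trans (le_of_eq ?_))
      norm_num
    have hp : 0 < hatw v (1 - xx n) / (16 * xx n ^ 3) :=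
      div_pos (hA n) (mul_pos (by norm_num) (pow_pos (xx_pos n) 3))
    rw [mul_comm, ← ENNReal.le_div_iff_mul_le (Or.inl (by simpa using hp)) (Or.inl (by simp)),
      ← ENNReal.ofReal_div_of_pos hp] at h3
    refine h3.trans (ENNReal.ofReal_le_ofReal ?_)
    have : M^2 / (hatw v (1 - xx n) / (16 * xx n ^ 3)) = 16 * M^2 * b n := by
      have := (hA n).ne'
      have := (xx_pos n).ne'
      simp only [hb]; field_simp
    rw [this]
    nlinarith [hb0 n]
  have hTfin : ∀ n, T n ≠ ⊤ := fun n => ((hTb n).trans_lt ENNReal.ofReal_lt_top).ne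
  have hvp : ∀ n, 0 < vx v (2^(n+1)) := fun n => by linarith [hlow n, hA n]
  refine aux_abs b (fun n => (T n).toReal) (fun n => (1/8:ℝ)^n / vx v (2^(n+1)))
    (1/8) (16*(M^2+1)) (8/D) 32 (by norm_num) (by positivity) (by positivity) (by norm_num)
    hb0 (fun n => ENNReal.toReal_nonneg) ?_ ?_ ?_ ?_ q hq
  · intro n
    have h := ENNReal.toReal_mono (hTfin n) (I2_step hv n)
    rw [ENNReal.toReal_add ENNReal.ofReal_ne_top (hTfin (n+1)), ENNReal.toReal_ofReal
      (div_nonneg (pow_nonneg (xx_pos n).le 3) (by linarith [hA n]))] at h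
    refine le_trans (le_of_eq ?_) h
    congr 1
    have := (hA n).ne'
    simp only [hb]; field_simp
  · intro n
    exact ENNReal.toReal_le_of_le_ofReal (mul_nonneg (by positivity) (hb0 n).le) (hTb n)
  · intro n
    simp only [hb]
    rw [hx8, le_div_iff₀ (hvp n)]
    calc _ ≤ 8 / D * (1 / 8 * (1 / 8) ^ n / hatw v (1 - xx n)) * (D * hatw v (1 - xx n)) :=
          mul_le_mul_of_nonneg_left (hDk n) (by have := hA n; positivity)
      _ = _ := by have := (hA n).ne'; field_simp
  · intro n
    simp only [hb]
    rw [hx8, div_le_iff₀ (hvp n)]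
    calc (1/8:ℝ)^n = 32 * (1 / 8 * (1 / 8) ^ n / hatw v (1 - xx n)) * (1/4 * hatw v (1 - xx n)) := by
          have := (hA n).ne'; field_simp; norm_num
      _ ≤ _ := mul_le_mul_of_nonneg_left (hlow n) (by have := hA n; positivity)

lemma term_eq (q : ℝ) (n : ℕ) (y : ℝ) (hy : 0 ≤ y) :
    (2:ℝ) ^ (-(3 * q * (n : ℝ))) * y ^ (-q) = ((1/8:ℝ)^n / y) ^ q := by
  rw [Real.div_rpow (by positivity) hy, Real.rpow_neg hy, div_eq_mul_inv]
  congr 1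
  rw [show (1/8:ℝ)^n = (2:ℝ)^(-(3 * (n:ℝ))) by
    rw [Real.rpow_neg (by norm_num), Real.rpow_mul (by norm_num), Real.rpow_natCast]
    rw [one_div, inv_pow]; norm_num, ← Real.rpow_mul (by norm_num)]
  congr 1; ring

/-- Lemma 3.5: if `v ∈ D̂` and `M₂(v) < ∞` then for every `q > 0`,
`Σ_{n=k}^∞ 2^{-3qn} v_{2^{n+1}}^{-q} ≤ C 2^{-3qk} v_{2^{k+1}}^{-q}`. -/
theorem statement11 (v : ℝ → ℝ) (hv : RadialWeight v) (hD : DoublingD v)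
    (hM2 : M2v v < ⊤) :
    ∀ q : ℝ, 0 < q → ∃ C : ℝ, 0 < C ∧ ∀ k : ℕ,
      (∑' m : ℕ, ENNReal.ofReal
          ((2:ℝ) ^ (-(3 * q * ((m + k : ℕ) : ℝ))) * (vx v (2^(m+k+1))) ^ (-q))) ≤
        ENNReal.ofReal (C * (2:ℝ) ^ (-(3 * q * (k:ℝ))) * (vx v (2^(k+1))) ^ (-q)) := by
  intro q hq
  have hnn : ∀ N, 0 ≤ vx v N := fun N =>
    (mul_nonneg (by positivity) (hatw_pos hv le_rfl one_pos).le).trans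
      (vx_lower hv N le_rfl zero_le_one)
  obtain ⟨C, hC, h⟩ := main_aux v hv hD hM2 q hq
  refine ⟨C, hC, fun k => ?_⟩
  rw [mul_assoc, term_eq q k _ (hnn _)]
  refine le_trans (le_of_eq ?_) (h k)
  congr 1
  funext m
  rw [term_eq q (m+k) _ (hnn _)]

end
end

section
/- Let v be a radial weight satisfying ∫₀¹ (1-s)²/v̂(s) ds < ∞ and M₁(v) = sup_{0<r<1} (∫_r¹ v̂(s)/(1-s)² ds)^{1/2} (∫₀^r 1/v̂(s) ds)^{1/2} < ∞. Let (f_j)_{j≥1} be a sequence of functions analytic on 𝔻 with sup_j ‖f_j‖_{D_v} < ∞ and such that f_j → 0 uniformly on every compact subset of 𝔻 as j → ∞. Then lim_{j→∞} ∫₀¹ |f_j(t)| dt = 0. -/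
open MeasureTheory Real Set Filter

noncomputable section

lemma fr_real (g : ℂ → ℂ) (hg : DifferentiableOn ℂ g (Metric.ball 0 1)) (s : ℝ) (hs : 0 < s)
    (hs1 : s < 1) :
    ∫ t in (-s)..s, ‖g (t:ℂ)‖^2 ≤ s / 2 * ∫ θ in (-π)..π, ‖g (circleMap 0 s θ)‖^2 := by
  set cj := starRingEnd ℂ with hcj
  set G : ℂ → ℂ := fun z => g z * cj (g (cj z)) with hG
  have hGd : DifferentiableOn ℂ G (Metric.ball 0 1) := by
    intro z hz
    have h1 : DifferentiableAt ℂ g z := hg.differentiableAt (Metric.isOpen_ball.mem_nhds hz)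
    have h2 : DifferentiableAt ℂ g (cj z) := by
      apply hg.differentiableAt (Metric.isOpen_ball.mem_nhds _)
      simpa [hcj] using hz
    have h3 := h2.conj_conj
    have h4 : DifferentiableAt ℂ (fun z => cj (g (cj z))) z := by
      have := h3
      simp only [hcj, Complex.conj_conj] at this
      exact this
    exact (h1.mul h4).differentiableWithinAt
  obtain ⟨P, hP⟩ := hGd.isExactOn_ball
  have hreal : ∀ t ∈ Icc (-s) s, ((t:ℝ):ℂ) ∈ Metric.ball (0:ℂ) 1 := by
    intro t ht
    simp only [Metric.mem_ball, dist_zero_right, Complex.norm_real, Real.norm_eq_abs]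
    exact abs_lt.2 ⟨by linarith [ht.1], by linarith [ht.2]⟩
  have hcirc : ∀ θ, circleMap 0 s θ ∈ Metric.ball (0:ℂ) 1 := by
    intro θ
    simp [circleMap_zero, abs_of_pos hs, hs1]
  have e1 : ∫ t in (-s)..s, G (t:ℂ) = P s - P ((-s:ℝ):ℂ) := by
    apply intervalIntegral.integral_eq_sub_of_hasDerivAt (f := fun t : ℝ => P (t:ℂ))
    · intro t ht
      rw [uIcc_of_le (by linarith)] at ht
      exact (hP _ (hreal t ht)).comp_ofReal
    · apply ContinuousOn.intervalIntegrable
      rw [uIcc_of_le (by linarith)]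
      exact hGd.continuousOn.comp (by fun_prop) hreal
  have e1' : ∫ t in (-s)..s, G (t:ℂ) = ((∫ t in (-s)..s, ‖g (t:ℂ)‖^2 : ℝ) : ℂ) := by
    rw [← intervalIntegral.integral_ofReal]
    congr 1; ext t
    simp [hG, hcj, Complex.mul_conj, Complex.normSq_eq_norm_sq]
  have e2 : ∫ θ in (0:ℝ)..π, (circleMap 0 s θ * Complex.I) * G (circleMap 0 s θ)
      = P ((-s:ℝ):ℂ) - P s := by
    have : ∫ θ in (0:ℝ)..π, (circleMap 0 s θ * Complex.I) * G (circleMap 0 s θ)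
      = P (circleMap 0 s π) - P (circleMap 0 s 0) := by
      apply intervalIntegral.integral_eq_sub_of_hasDerivAt (f := fun t : ℝ => P (circleMap 0 s t))
      · intro t ht
        have := (hP _ (hcirc t)).scomp t (hasDerivAt_circleMap 0 s t)
        simpa [Function.comp_def] using this
      · apply ContinuousOn.intervalIntegrable
        apply ContinuousOn.mul
        · fun_prop
        · exact hGd.continuousOn.comp (by fun_prop) (fun θ _ => hcirc θ)
    rw [this]
    simp [circleMap_zero]
  have hgc : Continuous (fun θ => ‖g (circleMap 0 s θ)‖^2) := by
    have : Continuous (fun θ => g (circleMap 0 s θ)) :=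
      hg.continuousOn.comp_continuous (by fun_prop) hcirc
    exact this.norm.pow 2
  have hnorm : ‖∫ θ in (0:ℝ)..π, (circleMap 0 s θ * Complex.I) * G (circleMap 0 s θ)‖ ≤
      ∫ θ in (0:ℝ)..π, s / 2 * (‖g (circleMap 0 s θ)‖^2 + ‖g (circleMap 0 s (-θ))‖^2) := by
    apply intervalIntegral.norm_integral_le_of_norm_le pi_pos.le
    · refine Eventually.of_forall fun θ _ => ?_
      have hc : cj (circleMap 0 s θ) = circleMap 0 s (-θ) := by
        simp [hcj, circleMap_zero, ← Complex.exp_conj]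
      simp only [hG, norm_mul, Complex.norm_I, hc, mul_one, norm_circleMap_zero, abs_of_pos hs]
      have : ‖cj (g (circleMap 0 s (-θ)))‖ = ‖g (circleMap 0 s (-θ))‖ := by simp [hcj]
      rw [this]
      nlinarith [mul_nonneg hs.le (sq_nonneg (‖g (circleMap 0 s θ)‖ - ‖g (circleMap 0 s (-θ))‖))]
    · apply Continuous.intervalIntegrable
      have := hgc.comp continuous_neg
      exact continuous_const.mul (hgc.add this)
  have hsum : ∫ θ in (0:ℝ)..π, s / 2 * (‖g (circleMap 0 s θ)‖^2 + ‖g (circleMap 0 s (-θ))‖^2)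
      = s / 2 * ∫ θ in (-π)..π, ‖g (circleMap 0 s θ)‖^2 := by
    have hgn : Continuous (fun θ => ‖g (circleMap 0 s (-θ))‖^2) := hgc.comp continuous_neg
    rw [intervalIntegral.integral_const_mul, intervalIntegral.integral_add
      (hgc.intervalIntegrable _ _) (hgn.intervalIntegrable _ _),
      intervalIntegral.integral_comp_neg (fun θ => ‖g (circleMap 0 s θ)‖^2), neg_zero, add_comm,
      intervalIntegral.integral_add_adjacent_intervals (hgc.intervalIntegrable _ _)
      (hgc.intervalIntegrable _ _)]
  rw [← hsum]
  refine le_trans ?_ hnorm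
  rw [e2, ← neg_sub, norm_neg, ← e1, e1', Complex.norm_real]
  exact le_abs_self _

lemma fr_enn (g : ℂ → ℂ) (hg : DifferentiableOn ℂ g (Metric.ball 0 1)) (s : ℝ) (hs : 0 < s)
    (hs1 : s < 1) :
    ∫⁻ t in Ioo 0 s, (‖g (t:ℂ)‖₊ : ENNReal)^2 ≤
      ENNReal.ofReal s * ∫⁻ θ in Ioo (-π) π, (‖g (circleMap 0 s θ)‖₊ : ENNReal)^2 := by
  have hreal : ∀ t ∈ Icc (-s) s, ((t:ℝ):ℂ) ∈ Metric.ball (0:ℂ) 1 := by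
    intro t ht
    simp only [Metric.mem_ball, dist_zero_right, Complex.norm_real, Real.norm_eq_abs]
    exact abs_lt.2 ⟨by linarith [ht.1], by linarith [ht.2]⟩
  have hcirc : ∀ θ, circleMap 0 s θ ∈ Metric.ball (0:ℂ) 1 := by
    intro θ
    simp [circleMap_zero, abs_of_pos hs, hs1]
  have hgc : Continuous (fun θ => ‖g (circleMap 0 s θ)‖^2) := by
    have : Continuous (fun θ => g (circleMap 0 s θ)) :=
      hg.continuousOn.comp_continuous (by fun_prop) hcirc
    exact this.norm.pow 2
  have hgr : ContinuousOn (fun t : ℝ => ‖g (t:ℂ)‖^2) (Icc (-s) s) :=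
    ((hg.continuousOn.comp (by fun_prop) hreal).norm).pow 2
  have hconv : ∀ w : ℂ, (‖w‖₊ : ENNReal)^2 = ENNReal.ofReal (‖w‖^2) := by
    intro w
    rw [ENNReal.ofReal_pow (norm_nonneg _), ofReal_norm]; rfl
  simp only [hconv]
  have key := fr_real g hg s hs hs1
  have hpi := pi_pos
  calc ∫⁻ t in Ioo 0 s, ENNReal.ofReal (‖g (t:ℂ)‖^2)
      ≤ ∫⁻ t in Ioc (-s) s, ENNReal.ofReal (‖g (t:ℂ)‖^2) := by
        apply lintegral_mono_set
        intro t ht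
        exact ⟨by linarith [ht.1], ht.2.le⟩
    _ = ENNReal.ofReal (∫ t in (-s)..s, ‖g (t:ℂ)‖^2) := by
        rw [intervalIntegral.integral_of_le (by linarith),
          ofReal_integral_eq_lintegral_ofReal]
        · exact (hgr.integrableOn_Icc).mono_set Ioc_subset_Icc_self
        · exact Eventually.of_forall fun t => by positivity
    _ ≤ ENNReal.ofReal (s * ∫ θ in (-π)..π, ‖g (circleMap 0 s θ)‖^2) := by
        apply ENNReal.ofReal_le_ofReal
        refine key.trans ?_
        have : 0 ≤ ∫ θ in (-π)..π, ‖g (circleMap 0 s θ)‖^2 :=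
          intervalIntegral.integral_nonneg (by linarith) fun _ _ => by positivity
        nlinarith [mul_nonneg hs.le this]
    _ = _ := by
        rw [ENNReal.ofReal_mul hs.le, intervalIntegral.integral_of_le (by linarith),
          integral_Ioc_eq_integral_Ioo, ofReal_integral_eq_lintegral_ofReal]
        · exact (hgc.integrableOn_Icc).mono_set Ioo_subset_Icc_self
        · exact Eventually.of_forall fun t => by positivity

lemma tri_swap (r : ℝ) (a b : ℝ → ENNReal) (ha : Measurable a) (hb : Measurable b) :
    ∫⁻ t in Ioo r 1, a t * ∫⁻ s in Ioo t 1, b s = ∫⁻ s in Ioo r 1, b s * ∫⁻ t in Ioo r s, a t := by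
  have hm : MeasurableSet {p : ℝ × ℝ | p.1 < p.2} := measurableSet_lt measurable_fst measurable_snd
  have h1 : ∀ t ∈ Ioo r 1, a t * ∫⁻ s in Ioo t 1, b s =
      ∫⁻ s in Ioo r 1, ({p : ℝ × ℝ | p.1 < p.2}.indicator (fun p => a p.1 * b p.2)) (t, s) := by
    intro t ht
    rw [← lintegral_const_mul _ hb]
    have : (fun s => ({p : ℝ × ℝ | p.1 < p.2}.indicator (fun p => a p.1 * b p.2)) (t, s)) =
        (Ioi t).indicator (fun s => a t * b s) := by
      ext s; simp [indicator]
    rw [this, lintegral_indicator measurableSet_Ioi, Measure.restrict_restrict measurableSet_Ioi]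
    congr 2
    ext s; simp only [mem_Ioo, mem_inter_iff, mem_Ioi]
    constructor
    · rintro ⟨h, h'⟩; exact ⟨h, ht.1.trans h, h'⟩
    · rintro ⟨h, _, h'⟩; exact ⟨h, h'⟩
  have h2 : ∀ s ∈ Ioo r 1, b s * ∫⁻ t in Ioo r s, a t =
      ∫⁻ t in Ioo r 1, ({p : ℝ × ℝ | p.1 < p.2}.indicator (fun p => a p.1 * b p.2)) (t, s) := by
    intro s hs
    rw [← lintegral_const_mul _ ha]
    have : (fun t => ({p : ℝ × ℝ | p.1 < p.2}.indicator (fun p => a p.1 * b p.2)) (t, s)) =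
        (Iio s).indicator (fun t => b s * a t) := by
      ext t; simp [indicator, mul_comm]
    rw [this, lintegral_indicator measurableSet_Iio, Measure.restrict_restrict measurableSet_Iio]
    congr 2
    ext t; simp only [mem_Ioo, mem_inter_iff, mem_Iio]
    constructor
    · rintro ⟨h, h'⟩; exact ⟨h', h, h'.trans hs.2⟩
    · rintro ⟨h, h', _⟩; exact ⟨h', h⟩
  rw [setLIntegral_congr_fun measurableSet_Ioo h1, setLIntegral_congr_fun measurableSet_Ioo h2]
  apply lintegral_lintegral_swap (f := fun t s =>
    ({p : ℝ × ℝ | p.1 < p.2}.indicator (fun p => a p.1 * b p.2)) (t, s))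
  apply Measurable.aemeasurable
  apply Measurable.indicator _ hm
  fun_prop

lemma polar_id (v : ℝ → ℝ) (hv : Measurable v) (g : ℂ → ℂ) (hg : Measurable g) :
    ∫⁻ z in Metric.ball (0:ℂ) 1, (‖g z‖₊ : ENNReal)^2 * ENNReal.ofReal (v ‖z‖) =
      ∫⁻ s in Ioo (0:ℝ) 1, ENNReal.ofReal (v s) * (ENNReal.ofReal s *
        ∫⁻ θ in Ioo (-π) π, (‖g (circleMap 0 s θ)‖₊ : ENNReal)^2) := by
  have hgc : Measurable (fun p : ℝ × ℝ => g (circleMap 0 p.1 p.2)) := by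
    apply hg.comp
    apply Continuous.measurable
    simp only [circleMap_zero]
    fun_prop
  have hmeas : Measurable (fun p : ℝ × ℝ => ENNReal.ofReal p.1 *
      ((Iio (1:ℝ)).indicator (fun s => ENNReal.ofReal (v s)) p.1 *
        (‖g (circleMap 0 p.1 p.2)‖₊ : ENNReal)^2)) := by
    have h1 : Measurable (fun s => (Iio (1:ℝ)).indicator (fun s => ENNReal.ofReal (v s)) s) :=
      Measurable.indicator (by fun_prop) measurableSet_Iio
    have h2 : Measurable (fun p : ℝ × ℝ =>
        (Iio (1:ℝ)).indicator (fun s => ENNReal.ofReal (v s)) p.1) := h1.comp measurable_fst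
    have h3 : Measurable (fun p : ℝ × ℝ => (‖g (circleMap 0 p.1 p.2)‖₊ : ENNReal)^2) := by fun_prop
    exact (by fun_prop : Measurable (fun p : ℝ × ℝ => ENNReal.ofReal p.1)).mul (h2.mul h3)
  rw [← lintegral_indicator measurableSet_ball, ← Complex.lintegral_comp_polarCoord_symm]
  have : ∀ p ∈ polarCoord.target, ENNReal.ofReal p.1 • (Metric.ball (0:ℂ) 1).indicator
      (fun z => (‖g z‖₊ : ENNReal)^2 * ENNReal.ofReal (v ‖z‖)) (Complex.polarCoord.symm p) =
      ENNReal.ofReal p.1 * ((Iio (1:ℝ)).indicator (fun s => ENNReal.ofReal (v s)) p.1 *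
        (‖g (circleMap 0 p.1 p.2)‖₊ : ENNReal)^2) := by
    rintro ⟨s, θ⟩ hp
    have hs : 0 < s := hp.1
    have hc : Complex.polarCoord.symm (s, θ) = circleMap 0 s θ := by
      simp [circleMap_zero, Complex.exp_mul_I]
    rw [hc]
    by_cases h : s < 1
    · simp [indicator, h, abs_of_pos hs, mul_comm]
    · simp [indicator, h, abs_of_pos hs]
  rw [setLIntegral_congr_fun polarCoord.open_target.measurableSet this, polarCoord_target,
    Measure.volume_eq_prod, setLIntegral_prod _ hmeas.aemeasurable]
  have h1 : ∀ s : ℝ, ∫⁻ θ in Ioo (-π) π, ENNReal.ofReal s *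
      ((Iio (1:ℝ)).indicator (fun s => ENNReal.ofReal (v s)) s *
        (‖g (circleMap 0 s θ)‖₊ : ENNReal)^2) = (Iio (1:ℝ)).indicator (fun s =>
      ENNReal.ofReal (v s) * (ENNReal.ofReal s *
        ∫⁻ θ in Ioo (-π) π, (‖g (circleMap 0 s θ)‖₊ : ENNReal)^2)) s := by
    intro s
    have h3 : Measurable (fun θ : ℝ => (‖g (circleMap 0 s θ)‖₊ : ENNReal)^2) := by
      have := hgc.comp (measurable_prodMk_left (x := s))
      have h4 : Measurable (fun θ : ℝ => g (circleMap 0 s θ)) := this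
      fun_prop
    by_cases h : s < 1
    · simp only [indicator, mem_Iio, h, if_true]
      rw [lintegral_const_mul _ (by fun_prop), lintegral_const_mul _ h3]
      ring
    · simp [indicator, h]
  simp only [h1]
  rw [lintegral_indicator measurableSet_Iio, Measure.restrict_restrict measurableSet_Iio]
  congr 2
  ext s; simp [and_comm]

lemma hatw_eq (v : ℝ → ℝ) (hv : RadialWeight v) (t : ℝ) (ht : t ∈ Ioo (0:ℝ) 1) :
    ENNReal.ofReal (hatw v t) = ∫⁻ s in Ioo t 1, ENNReal.ofReal (v s) := by
  unfold hatw
  rw [intervalIntegral.integral_of_le ht.2.le, integral_Ioc_eq_integral_Ioo,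
    ofReal_integral_eq_lintegral_ofReal]
  · exact hv.2.2.mono_set (Ioo_subset_Ioo_left ht.1.le)
  · refine (ae_restrict_iff' measurableSet_Ioo).2 (Eventually.of_forall fun s hs => ?_)
    exact (hv.2.1 s ⟨(ht.1.trans hs.1).le, hs.2⟩).le

lemma hatw_pos_s18 (v : ℝ → ℝ) (hv : RadialWeight v) (t : ℝ) (ht : t ∈ Ioo (0:ℝ) 1) :
    0 < hatw v t := by
  unfold hatw
  apply intervalIntegral.intervalIntegral_pos_of_pos_on _ _ ht.2
  · rw [intervalIntegrable_iff_integrableOn_Ioo_of_le ht.2.le]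
    exact hv.2.2.mono_set (Ioo_subset_Ioo_left ht.1.le)
  · intro s hs
    exact hv.2.1 s ⟨(ht.1.trans hs.1).le, hs.2⟩

lemma carl (v : ℝ → ℝ) (hv : RadialWeight v) (g : ℂ → ℂ) (hgm : Measurable g)
    (hg : DifferentiableOn ℂ g (Metric.ball 0 1)) :
    ∫⁻ t in Ioo (0:ℝ) 1, (‖g (t:ℂ)‖₊ : ENNReal)^2 * ENNReal.ofReal (hatw v t) ≤
    ∫⁻ z in Metric.ball (0:ℂ) 1, (‖g z‖₊ : ENNReal)^2 * ENNReal.ofReal (v ‖z‖) := by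
  rw [polar_id v hv.1 g hgm]
  have hvm := hv.1
  have hgr : Measurable (fun t : ℝ => (‖g (t:ℂ)‖₊ : ENNReal)^2) := by
    have : Measurable (fun t : ℝ => g (t:ℂ)) := hgm.comp Complex.measurable_ofReal
    fun_prop
  have h := tri_swap 0 (fun t : ℝ => (‖g (t:ℂ)‖₊ : ENNReal)^2) (fun s => ENNReal.ofReal (v s))
    hgr (by fun_prop)
  rw [setLIntegral_congr_fun measurableSet_Ioo (fun t ht => by
    simp only [hatw_eq v hv t ht]; rfl), h]
  apply setLIntegral_mono' measurableSet_Ioo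
  intro s hs
  gcongr
  exact fr_enn g hg s hs.1 hs.2

lemma tail_est (v : ℝ → ℝ) (hv : RadialWeight v) (g : ℂ → ℂ) (hgm : Measurable g)
    (hg : DifferentiableOn ℂ g (Metric.ball 0 1)) (r : ℝ) (hr : 0 ≤ r) :
    ∫⁻ t in Ioo r 1, ∫⁻ s in Ioo r t, (‖g (s:ℂ)‖₊ : ENNReal) ≤
    (∫⁻ s in Ioo r 1, ENNReal.ofReal ((1-s)^2 / hatw v s)) ^ (1/2:ℝ) *
    (∫⁻ z in Metric.ball (0:ℂ) 1, (‖g z‖₊ : ENNReal)^2 * ENNReal.ofReal (v ‖z‖)) ^ (1/2:ℝ) := by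
  have hgr : Measurable (fun t : ℝ => (‖g (t:ℂ)‖₊ : ENNReal)) := by
    have : Measurable (fun t : ℝ => g (t:ℂ)) := hgm.comp Complex.measurable_ofReal
    fun_prop
  have hsub : Ioo r 1 ⊆ Ioo (0:ℝ) 1 := Ioo_subset_Ioo_left hr
  have hwa : AEMeasurable (hatw v) (volume.restrict (Ioo r 1)) := by
    apply (aemeasurable_restrict_of_antitoneOn measurableSet_Ioo)
    intro x hx y hy hxy
    have e1 := hatw_eq v hv x (hsub hx)
    have e2 := hatw_eq v hv y (hsub hy)
    rw [← ENNReal.ofReal_le_ofReal_iff (hatw_pos_s18 v hv x (hsub hx)).le, e1, e2]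
    exact lintegral_mono_set (Ioo_subset_Ioo_left hxy)
  have h := tri_swap r (fun t : ℝ => (‖g (t:ℂ)‖₊ : ENNReal)) (fun _ => 1) hgr (by fun_prop)
  simp only [one_mul, lintegral_const, Measure.restrict_apply MeasurableSet.univ, univ_inter,
    Real.volume_Ioo] at h
  rw [← h]
  have hsplit : ∀ s ∈ Ioo r 1, (‖g (s:ℂ)‖₊ : ENNReal) * ENNReal.ofReal (1 - s) =
      ((fun s => ENNReal.ofReal ((1-s) / √(hatw v s))) *
        (fun s : ℝ => (‖g (s:ℂ)‖₊ : ENNReal) * ENNReal.ofReal (√(hatw v s)))) s := by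
    intro s hs
    have hp := Real.sqrt_pos.2 (hatw_pos_s18 v hv s (hsub hs))
    simp only [Pi.mul_apply]
    rw [mul_comm (‖g (s:ℂ)‖₊ : ENNReal) (ENNReal.ofReal (√(hatw v s))), ← mul_assoc,
      ← ENNReal.ofReal_mul (div_nonneg (by linarith [hs.2]) hp.le), div_mul_cancel₀ _ hp.ne',
      mul_comm]
  rw [setLIntegral_congr_fun measurableSet_Ioo hsplit]
  refine (ENNReal.lintegral_mul_le_Lp_mul_Lq _ Real.HolderConjugate.two_two ?_ ?_).trans ?_
  · fun_prop
  · exact hgr.aemeasurable.mul (by fun_prop)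
  refine mul_le_mul' (ENNReal.rpow_le_rpow ?_ (by norm_num)) (ENNReal.rpow_le_rpow ?_ (by norm_num))
  · apply le_of_eq
    apply setLIntegral_congr_fun measurableSet_Ioo
    intro s hs
    have hp := hatw_pos_s18 v hv s (hsub hs)
    simp only [ENNReal.rpow_two]
    rw [← ENNReal.ofReal_pow (div_nonneg (by linarith [hs.2]) (Real.sqrt_nonneg _)), div_pow,
      Real.sq_sqrt hp.le]
  · refine le_trans ?_ (carl v hv g hgm hg)
    refine le_trans (le_of_eq ?_) (lintegral_mono_set hsub)
    apply setLIntegral_congr_fun measurableSet_Ioo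
    intro s hs
    have hp := hatw_pos_s18 v hv s (hsub hs)
    simp only [ENNReal.rpow_two]
    rw [mul_pow, ← ENNReal.ofReal_pow (Real.sqrt_nonneg _), Real.sq_sqrt hp.le]

lemma ftc_est (f : ℂ → ℂ) (hf : DifferentiableOn ℂ f (Metric.ball 0 1)) (r t : ℝ) (hr : 0 ≤ r)
    (ht : t ∈ Ioo r 1) :
    (‖f (t:ℂ)‖₊ : ENNReal) ≤ (‖f (r:ℂ)‖₊ : ENNReal) +
      ∫⁻ s in Ioo r t, (‖deriv f (s:ℂ)‖₊ : ENNReal) := by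
  have hd : DifferentiableOn ℂ (deriv f) (Metric.ball 0 1) := hf.deriv Metric.isOpen_ball
  have hreal : ∀ x ∈ Icc r t, ((x:ℝ):ℂ) ∈ Metric.ball (0:ℂ) 1 := by
    intro x hx
    simp only [Metric.mem_ball, dist_zero_right, Complex.norm_real, Real.norm_eq_abs]
    exact abs_lt.2 ⟨by linarith [hx.1], by linarith [hx.2, ht.2]⟩
  have e1 : ∫ x in r..t, deriv f (x:ℂ) = f t - f r := by
    apply intervalIntegral.integral_eq_sub_of_hasDerivAt (f := fun t : ℝ => f (t:ℂ))
    · intro x hx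
      rw [uIcc_of_le ht.1.le] at hx
      exact (hf.differentiableAt (Metric.isOpen_ball.mem_nhds (hreal x hx))).hasDerivAt.comp_ofReal
    · apply ContinuousOn.intervalIntegrable
      rw [uIcc_of_le ht.1.le]
      exact hd.continuousOn.comp (by fun_prop) hreal
  have e2 : f t = f r + ∫ x in Ioo r t, deriv f (x:ℂ) := by
    rw [← integral_Ioc_eq_integral_Ioo, ← intervalIntegral.integral_of_le ht.1.le, e1]; ring
  change ‖f (t:ℂ)‖ₑ ≤ ‖f (r:ℂ)‖ₑ + ∫⁻ s in Ioo r t, ‖deriv f (s:ℂ)‖ₑ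
  rw [e2]
  refine (enorm_add_le _ _).trans ?_
  gcongr
  exact enorm_integral_le_lintegral_enorm _

/-- Lemma 3.4(i): for a bounded sequence in `D_v` converging to `0`
uniformly on compact subsets of the disc, `∫_0^1 |f_j(t)| dt → 0`. -/
theorem statement18 (v : ℝ → ℝ) (hv : RadialWeight v)
    (hvg2 : ∫⁻ s in Set.Ioo (0:ℝ) 1, ENNReal.ofReal ((1-s)^2 / hatw v s) < ⊤)
    (hM1 : M1v v < ⊤)
    (f : ℕ → ℂ → ℂ) (hf : ∀ j, DifferentiableOn ℂ (f j) (Metric.ball 0 1))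
    (K : ℝ) (hK : ∀ j, DvSq v (f j) ≤ ENNReal.ofReal K)
    (hconv : ∀ S : Set ℂ, S ⊆ Metric.ball 0 1 → IsCompact S →
      TendstoUniformlyOn (fun j z => f j z) (fun _ => (0:ℂ)) Filter.atTop S) :
    Filter.Tendsto (fun j => ∫⁻ t in Set.Ioo (0:ℝ) 1, (‖f j (t:ℂ)‖₊ : ENNReal))
      Filter.atTop (nhds 0) := by
  set B : ENNReal := ENNReal.ofReal π * ENNReal.ofReal K with hB
  have hpi0 : ENNReal.ofReal π ≠ 0 := by simp [pi_pos]
  have hBj : ∀ j, ∫⁻ z in Metric.ball (0:ℂ) 1,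
      (‖deriv (f j) z‖₊ : ENNReal)^2 * ENNReal.ofReal (v ‖z‖) ≤ B := by
    intro j
    have h1 := (le_add_self.trans (hK j) : (ENNReal.ofReal Real.pi)⁻¹ * _ ≤ _)
    rw [ENNReal.inv_mul_le_iff hpi0 ENNReal.ofReal_ne_top] at h1
    exact h1
  have hBtop : B ^ (1/2:ℝ) ≠ ⊤ := by
    apply ENNReal.rpow_ne_top_of_nonneg (by norm_num)
    exact ENNReal.mul_ne_top ENNReal.ofReal_ne_top ENNReal.ofReal_ne_top
  -- tails tend to zero
  have hT : Tendsto (fun n : ℕ => ∫⁻ s in Ioo (1 - 1/((n:ℝ)+1)) 1,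
      ENNReal.ofReal ((1-s)^2 / hatw v s)) atTop (nhds 0) := by
    have h := tendsto_setLIntegral_zero (μ := volume.restrict (Ioo (0:ℝ) 1)) hvg2.ne
      (l := atTop) (s := fun n : ℕ => Ioo (1 - 1/((n:ℝ)+1)) 1) (by
        refine tendsto_of_tendsto_of_tendsto_of_le_of_le tendsto_const_nhds
          (h := fun n : ℕ => ENNReal.ofReal (1/((n:ℝ)+1))) ?_ (fun _ => zero_le) ?_
        · have := ENNReal.tendsto_ofReal (tendsto_one_div_add_atTop_nhds_zero_nat (𝕜 := ℝ))
          simpa using this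
        · intro n
          refine (Measure.restrict_apply_le _ _).trans ?_
          simp)
    refine h.congr fun n => ?_
    rw [Measure.restrict_restrict measurableSet_Ioo, inter_eq_left.2]
    apply Ioo_subset_Ioo_left
    have : 1/((n:ℝ)+1) ≤ 1 := by
      rw [div_le_one (by positivity)]; linarith [n.cast_nonneg (α := ℝ)]
    linarith
  have hT2 : Tendsto (fun n : ℕ => (∫⁻ s in Ioo (1 - 1/((n:ℝ)+1)) 1,
      ENNReal.ofReal ((1-s)^2 / hatw v s)) ^ (1/2:ℝ) * B ^ (1/2:ℝ)) atTop (nhds 0) := by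
    have h1 := ENNReal.Tendsto.mul_const (b := B ^ (1/2:ℝ))
      ((ENNReal.continuous_rpow_const (y := (1/2:ℝ))).tendsto 0 |>.comp hT) (Or.inr hBtop)
    simpa using h1
  rw [ENNReal.tendsto_nhds_zero]
  intro ε hε
  have hε3 : 0 < ε / 3 := by simpa using hε.ne'
  obtain ⟨n, hn⟩ := ((ENNReal.tendsto_nhds_zero.1 hT2) (ε/3) hε3).exists
  set r : ℝ := 1 - 1/((n:ℝ)+1) with hrdef
  have hr0 : 0 ≤ r := by
    have : 1/((n:ℝ)+1) ≤ 1 := by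
      rw [div_le_one (by positivity)]; linarith [n.cast_nonneg (α := ℝ)]
    linarith
  have hr1 : r < 1 := by
    have : 0 < 1/((n:ℝ)+1) := by positivity
    linarith
  have hu := hconv (Metric.closedBall 0 r) (Metric.closedBall_subset_ball hr1)
    (isCompact_closedBall _ _)
  have hu' : ∀ᶠ j in atTop, ∀ z ∈ Metric.closedBall (0:ℂ) r, (‖f j z‖₊ : ENNReal) ≤ ε/3 := by
    have := EMetric.tendstoUniformlyOn_iff.1 hu (ε/3) hε3
    filter_upwards [this] with j hj z hz
    have := (hj z hz).le
    rw [edist_comm, edist_zero_right] at this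
    exact this
  filter_upwards [hu'] with j hj
  have hmem : ∀ t ∈ Icc 0 r, ((t:ℝ):ℂ) ∈ Metric.closedBall (0:ℂ) r := by
    intro t ht
    simp [abs_of_nonneg ht.1, ht.2]
  have hd : DifferentiableOn ℂ (deriv (f j)) (Metric.ball 0 1) := (hf j).deriv Metric.isOpen_ball
  have htail := tail_est v hv (deriv (f j)) (measurable_deriv _) hd r hr0
  have hrr := hj _ (hmem r ⟨hr0, le_rfl⟩)
  calc ∫⁻ t in Set.Ioo (0:ℝ) 1, (‖f j (t:ℂ)‖₊ : ENNReal)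
      ≤ ∫⁻ t in Ioc 0 r ∪ Ioo r 1, (‖f j (t:ℂ)‖₊ : ENNReal) := by
        apply lintegral_mono_set
        intro t ht
        rcases le_or_gt t r with h | h
        · exact Or.inl ⟨ht.1, h⟩
        · exact Or.inr ⟨h, ht.2⟩
    _ ≤ (∫⁻ t in Ioc 0 r, (‖f j (t:ℂ)‖₊ : ENNReal)) + ∫⁻ t in Ioo r 1, (‖f j (t:ℂ)‖₊ : ENNReal) :=
        lintegral_union_le _ _ _
    _ ≤ (∫⁻ t in Ioc 0 r, ε/3) + ∫⁻ t in Ioo r 1, (ε/3 +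
          ∫⁻ s in Ioo r t, (‖deriv (f j) (s:ℂ)‖₊ : ENNReal)) := by
        apply add_le_add
        · exact setLIntegral_mono' measurableSet_Ioc fun t ht => hj _ (hmem t ⟨ht.1.le, ht.2⟩)
        · refine setLIntegral_mono' measurableSet_Ioo fun t ht => ?_
          exact (ftc_est (f j) (hf j) r t hr0 ht).trans (by gcongr)
    _ = ε/3 * ENNReal.ofReal r + (ε/3 * ENNReal.ofReal (1-r) + ∫⁻ t in Ioo r 1,
          ∫⁻ s in Ioo r t, (‖deriv (f j) (s:ℂ)‖₊ : ENNReal)) := by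
        rw [lintegral_add_left measurable_const]
        simp
    _ ≤ ε/3 * 1 + (ε/3 * 1 + ε/3) := by
        gcongr
        · exact ENNReal.ofReal_le_one.2 hr1.le
        · exact ENNReal.ofReal_le_one.2 (by linarith)
        · refine htail.trans (le_trans ?_ hn)
          gcongr
          exact hBj j
    _ = ε := by
        rw [mul_one, ← add_assoc, ENNReal.add_thirds]

end
end
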